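/- arXiv:2310.14770 — 2 statements merged into one kernel-verified Lean document; each statement's English description precedes it below -/
import Mathlib

section
/- Theorem (H-consistency bound for cross-entropy score-based surrogates, conditional form, case μ ∈ [0,1)). For every μ ∈ [0,1), every conditional probability vector p, and every score vector v ∈ ℝ^{n+1}, the abstention calibration gap is bounded by the surrogate calibration gap as ΔC_abs(v,p) ≤ sqrt( (2 − c) · 2^μ · (2 − μ) · ΔC_μ(v,p) ). This is the conditional (pointwise) form, over a symmetric and complete hypothesis set, of the H-consistency bound E_{L_abs}(h) − E*_{L_abs}(H) + M_{L_abs}(H) ≤ Γ_μ(E_{L_μ}(h) − E*_{L_μ}(H) + M_{L_μ}(H)) with Γ_μ(t) = sqrt((2−c)2^μ(2−μ)t). -/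
/- Setting: `n = m + 1 ≥ 2` classes (indices `0, …, m` of `Fin (m+2)` via `castSucc`), the
abstention label is `Fin.last (m+1)`, and `c ∈ (0,1)` is the abstention cost. -/

/-- Maximum of the class scores. -/
noncomputable def classMax (m : ℕ) (v : Fin (m + 2) → ℝ) : ℝ :=
  Finset.univ.sup' Finset.univ_nonempty (fun i : Fin (m + 1) => v i.castSucc)

/-- The prediction `𝗁(v)` of a score vector: the abstention label `Fin.last (m+1)` if its score
is at least the maximal class score, and otherwise the smallest class index achieving the
maximal class score (deterministic tie-breaking). -/
noncomputable def pred (m : ℕ) (v : Fin (m + 2) → ℝ) : Fin (m + 2) :=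
  if classMax m v ≤ v (Fin.last (m + 1)) then Fin.last (m + 1)
  else Fin.castSucc <|
    (Finset.univ.filter fun i : Fin (m + 1) => v i.castSucc = classMax m v).min'
      (by
        obtain ⟨b, -, hb⟩ :=
          Finset.exists_mem_eq_sup' (Finset.univ_nonempty (α := Fin (m + 1)))
            (fun i : Fin (m + 1) => v i.castSucc)
        exact ⟨b, Finset.mem_filter.mpr ⟨Finset.mem_univ b, hb.symm⟩⟩)

/-- Extension of a conditional probability vector by `p (n+1) := 1 - c`. -/
noncomputable def pext (m : ℕ) (c : ℝ) (p : Fin (m + 1) → ℝ) : Fin (m + 2) → ℝ :=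
  Fin.snoc p (1 - c)

/-- Conditional abstention risk `C_abs(v, p) = 1 - p(𝗁(v))`. -/
noncomputable def condAbsRisk (m : ℕ) (c : ℝ) (p : Fin (m + 1) → ℝ)
    (v : Fin (m + 2) → ℝ) : ℝ :=
  1 - pext m c p (pred m v)

/-- The cross-entropy family of losses `ℓ_μ` (logistic loss at `μ = 1`, generalized
cross-entropy for `μ ∈ (1,2)`, mean absolute error at `μ = 2`). -/
noncomputable def ellmu (m : ℕ) (μ : ℝ) (v : Fin (m + 2) → ℝ) (y : Fin (m + 2)) : ℝ :=
  if μ = 1 then Real.log (∑ y', Real.exp (v y' - v y))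
  else (1 / (1 - μ)) * ((∑ y', Real.exp (v y' - v y)) ^ (1 - μ) - 1)

/-- Conditional risk of the cross-entropy score-based surrogate
`C_μ(v, p) = Σ_{y=1}^{n+1} p(y) ℓ_μ(v, y)`, with `p(n+1) = 1 - c`. -/
noncomputable def condSurRisk (m : ℕ) (μ c : ℝ) (p : Fin (m + 1) → ℝ)
    (v : Fin (m + 2) → ℝ) : ℝ :=
  ∑ y, pext m c p y * ellmu m μ v y

lemma aux_bern (k x : ℝ) (hk : 0 ≤ k) (hx : 0 < x) : 1 - k * (x - 1) ≤ x ^ (-k) := by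
  rw [Real.rpow_def_of_pos hx]
  have h1 := Real.add_one_le_exp (Real.log x * -k)
  have h2 := Real.log_le_sub_one_of_pos hx
  nlinarith

lemma aux_odd (k : ℝ) (hk : 0 ≤ k) (u : ℝ) (hu0 : 0 ≤ u) (hu1 : u < 1) :
    2 * k * u ≤ (1 - u) ^ (-k) - (1 + u) ^ (-k) := by
  have hd : ∀ x ∈ Set.Ico (0 : ℝ) 1, HasDerivAt
      (fun x : ℝ => (1 - x) ^ (-k) - (1 + x) ^ (-k) - 2 * k * x)
      (k * ((1 - x) ^ (-(k + 1)) + (1 + x) ^ (-(k + 1)) - 2)) x := by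
    intro x hx
    have h1 : HasDerivAt (fun x : ℝ => (1 - x)) (-1) x := by
      simpa using (hasDerivAt_id x).const_sub 1
    have h2 : HasDerivAt (fun x : ℝ => (1 + x)) 1 x := by
      simpa using (hasDerivAt_id x).const_add 1
    have h3 := h1.rpow_const (p := -k) (Or.inl (sub_pos.2 hx.2).ne')
    have h4 := h2.rpow_const (p := -k) (Or.inl (by linarith [hx.1] : (0:ℝ) < 1 + x).ne')
    have h5 : HasDerivAt (fun x : ℝ => 2 * k * x) (2 * k) x := by
      simpa using (hasDerivAt_id x).const_mul (2 * k)
    refine HasDerivAt.congr_deriv ((h3.sub h4).sub h5) ?_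
    rw [show -k - 1 = -(k + 1) by ring]
    ring
  have hm : MonotoneOn (fun x : ℝ => (1 - x) ^ (-k) - (1 + x) ^ (-k) - 2 * k * x)
      (Set.Ico 0 1) := by
    apply monotoneOn_of_deriv_nonneg (convex_Ico 0 1)
    · intro x hx
      exact (hd x hx).continuousAt.continuousWithinAt
    · intro x hx
      exact (hd x (interior_subset hx)).differentiableAt.differentiableWithinAt
    · intro x hx
      have hx' := interior_subset hx
      rw [(hd x hx').deriv]
      have h1 := aux_bern (k + 1) (1 - x) (by linarith) (by linarith [hx'.2])
      have h2 := aux_bern (k + 1) (1 + x) (by linarith) (by linarith [hx'.1])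
      apply mul_nonneg hk
      linarith
  have := hm (a := 0) (b := u) ⟨le_rfl, one_pos⟩ ⟨hu0, hu1⟩ hu0
  simp at this
  linarith

lemma aux_main (a : ℝ) (ha0 : 0 < a) (ha1 : a ≤ 1) (u : ℝ) (hu0 : 0 ≤ u) (hu1 : u < 1) :
    (1 + (1 + a) * u) * (1 + u) ^ (-a) + (1 - (1 + a) * u) * (1 - u) ^ (-a)
      ≤ 2 - a * (1 + a) * u ^ 2 := by
  have hd : ∀ x ∈ Set.Ico (0 : ℝ) 1, HasDerivAt
      (fun x : ℝ => (1 + (1 + a) * x) * (1 + x) ^ (-a) + (1 - (1 + a) * x) * (1 - x) ^ (-a)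
        + a * (1 + a) * x ^ 2)
      (-((1 + a) * (1 - a)) * ((1 - x) ^ (-a) - (1 + x) ^ (-a))
        - a ^ 2 * ((1 - x) ^ (-(a + 1)) - (1 + x) ^ (-(a + 1))) + 2 * a * (1 + a) * x) x := by
    intro x hx
    have hp1 : (0 : ℝ) < 1 - x := sub_pos.2 hx.2
    have hp2 : (0 : ℝ) < 1 + x := by linarith [hx.1]
    have h1 : HasDerivAt (fun x : ℝ => (1 - x)) (-1) x := by
      simpa using (hasDerivAt_id x).const_sub 1
    have h2 : HasDerivAt (fun x : ℝ => (1 + x)) 1 x := by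
      simpa using (hasDerivAt_id x).const_add 1
    have h3 := h1.rpow_const (p := -a) (Or.inl hp1.ne')
    have h4 := h2.rpow_const (p := -a) (Or.inl hp2.ne')
    have h5 : HasDerivAt (fun x : ℝ => 1 + (1 + a) * x) (1 + a) x := by
      simpa using ((hasDerivAt_id x).const_mul (1 + a)).const_add 1
    have h6 : HasDerivAt (fun x : ℝ => 1 - (1 + a) * x) (-(1 + a)) x := by
      simpa using ((hasDerivAt_id x).const_mul (1 + a)).const_sub 1
    have h7 : HasDerivAt (fun x : ℝ => a * (1 + a) * x ^ 2) (a * (1 + a) * (2 * x)) x := by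
      simpa using (hasDerivAt_pow 2 x).const_mul (a * (1 + a))
    refine HasDerivAt.congr_deriv (((h5.mul h4).add (h6.mul h3)).add h7) ?_
    have e1 : (1 - x) ^ (-a) = (1 - x) ^ (-(a + 1)) * (1 - x) := by
      rw [← Real.rpow_add_one hp1.ne']; congr 1; ring
    have e2 : (1 + x) ^ (-a) = (1 + x) ^ (-(a + 1)) * (1 + x) := by
      rw [← Real.rpow_add_one hp2.ne']; congr 1; ring
    rw [show -a - 1 = -(a + 1) by ring, e1, e2]
    ring
  have hm : AntitoneOn (fun x : ℝ => (1 + (1 + a) * x) * (1 + x) ^ (-a)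
        + (1 - (1 + a) * x) * (1 - x) ^ (-a) + a * (1 + a) * x ^ 2) (Set.Ico 0 1) := by
    apply antitoneOn_of_deriv_nonpos (convex_Ico 0 1)
    · intro x hx
      exact (hd x hx).continuousAt.continuousWithinAt
    · intro x hx
      exact (hd x (interior_subset hx)).differentiableAt.differentiableWithinAt
    · intro x hx
      have hx' := interior_subset hx
      rw [(hd x hx').deriv]
      have h1 := mul_le_mul_of_nonneg_left (aux_odd a ha0.le x hx'.1 hx'.2)
        (mul_nonneg (by linarith : 0 ≤ 1 + a) (by linarith : 0 ≤ 1 - a))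
      have h2 := mul_le_mul_of_nonneg_left (aux_odd (a + 1) (by linarith) x hx'.1 hx'.2)
        (sq_nonneg a)
      linarith
  have := hm (a := 0) (b := u) ⟨le_rfl, one_pos⟩ ⟨hu0, hu1⟩ hu0
  simp at this
  linarith

/-- two-coordinate inequality -/
lemma aux_two (a : ℝ) (ha0 : 0 < a) (ha1 : a ≤ 1) (q r : ℝ) (hr : 0 ≤ r) (hqr : r < q)
    (w : ℝ) (hw0 : 0 ≤ w) (hw1 : w < 1) (u : ℝ) (hu : u = (q - r) / ((1 + a) * (q + r))) :
    a * (q - r) ^ 2 / (2 * (1 + a) * (q + r)) ≤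
      q * ((1 - w) ^ (-a) - (1 + u) ^ (-a)) + r * ((1 + w) ^ (-a) - (1 - u) ^ (-a)) := by
  have hP : 0 < q + r := by linarith
  have hu0 : 0 ≤ u := by rw [hu]; apply div_nonneg; linarith; positivity
  have hu1 : u < 1 := by
    rw [hu, div_lt_one (by positivity)]; nlinarith
  have hm := aux_main a ha0 ha1 u hu0 hu1
  have hD : q - r = (1 + a) * u * (q + r) := by rw [hu]; field_simp
  have hq : q = (q + r) / 2 * (1 + (1 + a) * u) := by linarith
  have hr' : r = (q + r) / 2 * (1 - (1 + a) * u) := by linarith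
  have e : a * (q - r) ^ 2 / (2 * (1 + a) * (q + r)) = (q + r) / 2 * (a * (1 + a) * u ^ 2) := by
    rw [hD]; field_simp
  rw [e]
  have b1 := aux_bern a (1 - w) ha0.le (by linarith)
  have b2 := aux_bern a (1 + w) ha0.le (by linarith)
  have b3 : q + r ≤ q * (1 - w) ^ (-a) + r * (1 + w) ^ (-a) := by
    have := mul_le_mul_of_nonneg_left b1 (by linarith : 0 ≤ q)
    have := mul_le_mul_of_nonneg_left b2 hr
    have := mul_nonneg (mul_nonneg ha0.le hw0) (by linarith : 0 ≤ q - r)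
    linarith
  have m2 := mul_le_mul_of_nonneg_left hm (by linarith : 0 ≤ (q + r) / 2)
  have e1 : q * (1 + u) ^ (-a) = (q + r) / 2 * ((1 + (1 + a) * u) * (1 + u) ^ (-a)) := by
    rw [← mul_assoc, ← hq]
  have e2 : r * (1 - u) ^ (-a) = (q + r) / 2 * ((1 - (1 + a) * u) * (1 - u) ^ (-a)) := by
    rw [← mul_assoc, ← hr']
  linarith

lemma le_pred (m : ℕ) (v : Fin (m + 2) → ℝ) (y : Fin (m + 2)) : v y ≤ v (pred m v) := by
  have hcl : ∀ i : Fin (m + 1), v i.castSucc ≤ classMax m v := fun i =>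
    Finset.le_sup' (fun i : Fin (m + 1) => v i.castSucc) (Finset.mem_univ i)
  unfold pred
  split_ifs with h
  · induction y using Fin.lastCases with
    | last => exact le_rfl
    | cast i => exact (hcl i).trans h
  · have := Finset.min'_mem (Finset.univ.filter fun i : Fin (m + 1) =>
      v i.castSucc = classMax m v) (by
        obtain ⟨b, -, hb⟩ :=
          Finset.exists_mem_eq_sup' (Finset.univ_nonempty (α := Fin (m + 1)))
            (fun i : Fin (m + 1) => v i.castSucc)
        exact ⟨b, Finset.mem_filter.mpr ⟨Finset.mem_univ b, hb.symm⟩⟩)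
    rw [(Finset.mem_filter.mp this).2]
    push Not at h
    induction y using Fin.lastCases with
    | last => exact h.le
    | cast i => exact hcl i

lemma ell_eq (m : ℕ) (μ : ℝ) (hμ : μ < 1) (v : Fin (m + 2) → ℝ) (y : Fin (m + 2)) :
    ellmu m μ v y = (1 / (1 - μ)) * (((∑ y', Real.exp (v y')) / Real.exp (v y)) ^ (1 - μ) - 1) := by
  unfold ellmu
  rw [if_neg hμ.ne, Finset.sum_div]
  simp_rw [Real.exp_sub]

lemma ell_nonneg (m : ℕ) (μ : ℝ) (hμ : μ < 1) (v : Fin (m + 2) → ℝ) (y : Fin (m + 2)) :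
    0 ≤ ellmu m μ v y := by
  rw [ell_eq m μ hμ]
  have h1 : 1 ≤ (∑ y', Real.exp (v y')) / Real.exp (v y) := by
    rw [one_le_div (Real.exp_pos _)]
    exact Finset.single_le_sum (f := fun y' => Real.exp (v y'))
      (fun i _ => (Real.exp_pos _).le) (Finset.mem_univ y)
  have h2 := Real.one_le_rpow h1 (by linarith : 0 ≤ 1 - μ)
  apply mul_nonneg
  · apply div_nonneg one_pos.le; linarith
  · linarith

lemma pext_nonneg (m : ℕ) (c : ℝ) (hc : c < 1) (p : Fin (m + 1) → ℝ) (hp0 : ∀ y, 0 ≤ p y)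
    (y : Fin (m + 2)) : 0 ≤ pext m c p y := by
  unfold pext
  induction y using Fin.lastCases with
  | last => simp; linarith
  | cast i => simpa using hp0 i

lemma pext_sum (m : ℕ) (c : ℝ) (p : Fin (m + 1) → ℝ) (hp1 : ∑ y, p y = 1) :
    ∑ y, pext m c p y = 2 - c := by
  rw [Fin.sum_univ_castSucc]
  simp [pext, hp1]; ring

lemma sum_two {k : ℕ} (i j : Fin k) (hij : i ≠ j) (f g : Fin k → ℝ)
    (h : ∀ y, y ≠ i → y ≠ j → f y = g y) :
    ∑ y, f y - ∑ y, g y = (f i - g i) + (f j - g j) := by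
  rw [← Finset.sum_sub_distrib, ← Finset.sum_pair (f := fun y => f y - g y) hij]
  symm
  apply Finset.sum_subset (Finset.subset_univ _)
  intro y _ hy
  simp at hy
  rw [h y hy.1 hy.2, sub_self]

lemma aux_fs1 (Z E t : ℝ) (hE : 0 < E) (ht : 0 < t) : Z / (E / 2 * t) = 2 * Z / E * t⁻¹ := by
  field_simp

lemma gap (m : ℕ) (c : ℝ) (hc1 : c < 1) (μ : ℝ) (hμ0 : 0 ≤ μ) (hμ : μ < 1)
    (p : Fin (m + 1) → ℝ) (hp0 : ∀ y, 0 ≤ p y)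
    (v : Fin (m + 2) → ℝ) (i j : Fin (m + 2)) (hv : v i ≤ v j)
    (hq : pext m c p j < pext m c p i) :
    ∃ w, 2 ^ (1 - μ) * ((pext m c p i - pext m c p j) ^ 2 /
        (2 * (2 - μ) * (pext m c p i + pext m c p j)))
      ≤ condSurRisk m μ c p v - condSurRisk m μ c p w := by
  have hij : i ≠ j := by rintro rfl; exact lt_irrefl _ hq
  have hr := pext_nonneg m c hc1 p hp0 j
  set q := pext m c p i with hqd
  set r := pext m c p j with hrd
  obtain ⟨a, ha⟩ : ∃ a, a = 1 - μ := ⟨_, rfl⟩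
  have ha0 : 0 < a := by linarith
  set E := Real.exp (v i) + Real.exp (v j) with hE
  have hEi := Real.exp_pos (v i)
  have hEj := Real.exp_pos (v j)
  have hE0 : 0 < E := by positivity
  obtain ⟨x, hx⟩ : ∃ x, x = (Real.exp (v j) - Real.exp (v i)) / E := ⟨_, rfl⟩
  have hx0 : 0 ≤ x := by
    rw [hx]; exact div_nonneg (sub_nonneg.2 (Real.exp_le_exp.2 hv)) hE0.le
  have hx1 : x < 1 := by rw [hx, div_lt_one hE0]; linarith
  have hvi : Real.exp (v i) = E / 2 * (1 - x) := by rw [hx]; field_simp; rw [hE]; ring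
  have hvj : Real.exp (v j) = E / 2 * (1 + x) := by rw [hx]; field_simp; rw [hE]; ring
  obtain ⟨u, hu⟩ : ∃ u, u = (q - r) / ((1 + a) * (q + r)) := ⟨_, rfl⟩
  have hu0 : 0 ≤ u := by rw [hu]; apply div_nonneg; linarith; apply mul_nonneg <;> linarith
  have hP : 0 < q + r := by linarith
  have hu1 : u < 1 := by
    rw [hu, div_lt_one (by positivity)]; nlinarith
  have key := aux_two a ha0 (by linarith) q r hr hq x hx0 hx1 u hu
  set w : Fin (m + 2) → ℝ := fun y => if y = i then Real.log (E / 2 * (1 + u)) else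
    if y = j then Real.log (E / 2 * (1 - u)) else v y with hw
  have hwi : Real.exp (w i) = E / 2 * (1 + u) := by
    simp only [hw, if_true]; rw [Real.exp_log (by positivity)]
  have hwj : Real.exp (w j) = E / 2 * (1 - u) := by
    simp only [hw, if_neg hij.symm, if_true]
    rw [Real.exp_log (mul_pos (by positivity) (by linarith))]
  have hwo : ∀ y, y ≠ i → y ≠ j → w y = v y := by
    intro y h1 h2; simp only [hw, if_neg h1, if_neg h2]
  have hZ : ∑ y, Real.exp (v y) = ∑ y, Real.exp (w y) := by
    have := sum_two i j hij (fun y => Real.exp (v y)) (fun y => Real.exp (w y))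
      (fun y h1 h2 => by simp only [hwo y h1 h2])
    simp only [hwi, hwj] at this
    linarith
  set Z := ∑ y, Real.exp (v y) with hZd
  have hEZ : E ≤ Z := by
    rw [hE, ← Finset.sum_pair (f := fun y => Real.exp (v y)) hij]
    exact Finset.sum_le_sum_of_subset_of_nonneg (Finset.subset_univ _)
      (fun y _ _ => (Real.exp_pos _).le)
  have hZ0 : 0 < Z := by linarith
  have hK : (2 : ℝ) ^ a ≤ (2 * Z / E) ^ a := by
    apply Real.rpow_le_rpow (by norm_num) _ ha0.le
    rw [le_div_iff₀ hE0]; linarith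
  have hpow : ∀ t : ℝ, 0 < t → (Z / (E / 2 * t)) ^ a = (2 * Z / E) ^ a * t ^ (-a) := by
    intro t ht
    rw [Real.rpow_neg ht.le, ← Real.inv_rpow ht.le, ← Real.mul_rpow (div_nonneg (by linarith) hE0.le) (inv_nonneg.2 ht.le)]
    congr 1; exact aux_fs1 Z E t hE0 ht
  refine ⟨w, ?_⟩
  unfold condSurRisk
  rw [sum_two i j hij _ _ (fun y h1 h2 => by
    rw [ell_eq m μ hμ, ell_eq m μ hμ, ← hZ, hwo y h1 h2])]
  simp only [ell_eq m μ hμ, ← hZ, ← hZd, ← hqd, ← hrd, ← ha, hwi, hwj, hvi, hvj]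
  rw [hpow _ (by linarith), hpow _ (by linarith), hpow _ (by linarith), hpow _ (by linarith)]
  set K := (2 * Z / E) ^ a
  have hL : 0 ≤ (q - r) ^ 2 / (2 * (1 + a) * (q + r)) := by positivity
  calc _ ≤ K * ((q - r) ^ 2 / (2 * (1 + a) * (q + r))) := by
        rw [show 2 - μ = 1 + a by linarith]
        exact mul_le_mul_of_nonneg_right hK hL
    _ = K * (1 / a) * (a * (q - r) ^ 2 / (2 * (1 + a) * (q + r))) := by
        rw [mul_div_assoc a, mul_assoc K, ← mul_assoc (1 / a), one_div_mul_cancel ha0.ne', one_mul]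
    _ ≤ K * (1 / a) * _ := mul_le_mul_of_nonneg_left key
        (mul_nonneg (le_trans (Real.rpow_nonneg (by norm_num) a) hK) (one_div_nonneg.2 ha0.le))
    _ = _ := by ring

/-- **Theorem (H-consistency bound for cross-entropy score-based surrogates, conditional
form, case `μ ∈ [0,1)`).** The abstention calibration gap is bounded by
`sqrt((2-c) · 2^μ · (2-μ) · ΔC_μ(v,p))`, where the calibration gaps are taken over all
score vectors (symmetric and complete hypothesis set). -/
theorem stmt_2 (m : ℕ) (hm : 1 ≤ m) (c : ℝ) (hc : c ∈ Set.Ioo (0 : ℝ) 1)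
    (μ : ℝ) (hμ : μ ∈ Set.Ico (0 : ℝ) 1)
    (p : Fin (m + 1) → ℝ) (hp0 : ∀ y, 0 ≤ p y) (hp1 : ∑ y, p y = 1)
    (v : Fin (m + 2) → ℝ) :
    condAbsRisk m c p v - ⨅ w, condAbsRisk m c p w
      ≤ Real.sqrt ((2 - c) * (2 : ℝ) ^ μ * (2 - μ) *
          (condSurRisk m μ c p v - ⨅ w, condSurRisk m μ c p w)) := by
  have hq0 := pext_nonneg m c hc.2 p hp0
  obtain ⟨i, hi⟩ := Finite.exists_max (pext m c p)
  have hinf : 1 - pext m c p i ≤ ⨅ w, condAbsRisk m c p w := by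
    apply le_ciInf
    intro w
    unfold condAbsRisk
    linarith [hi (pred m w)]
  have hv := le_pred m v i
  unfold condAbsRisk at hinf ⊢
  set j := pred m v with hj
  by_cases hq : pext m c p j < pext m c p i
  · obtain ⟨w, hw⟩ := gap m c hc.2 μ hμ.1 hμ.2 p hp0 v i j hv hq
    have hb : BddBelow (Set.range fun w => condSurRisk m μ c p w) := by
      refine ⟨0, ?_⟩
      rintro _ ⟨w, rfl⟩
      exact Finset.sum_nonneg fun y _ => mul_nonneg (hq0 y) (ell_nonneg m μ hμ.2 w y)
    have hw2 : ⨅ w, condSurRisk m μ c p w ≤ condSurRisk m μ c p w := ciInf_le hb w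
    have hij : i ≠ j := by intro h; rw [h] at hq; exact lt_irrefl _ hq
    have hP2 : pext m c p i + pext m c p j ≤ 2 - c := by
      rw [← pext_sum m c p hp1, ← Finset.sum_pair hij]
      exact Finset.sum_le_sum_of_subset_of_nonneg (Finset.subset_univ _) (fun y _ _ => hq0 y)
    have hrj := hq0 j
    have hμ0 := hμ.1
    have hμ1 := hμ.2
    have hc1 := hc.2
    set q := pext m c p i
    set r := pext m c p j
    have hP : 0 < q + r := by linarith
    refine le_trans (by linarith : _ ≤ q - r) (Real.le_sqrt_of_sq_le ?_)
    have h2 : (0 : ℝ) < 2 ^ μ := by positivity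
    have hA : 0 ≤ (2 - c) * (2 : ℝ) ^ μ * (2 - μ) :=
      mul_nonneg (mul_nonneg (by linarith) h2.le) (by linarith)
    refine le_trans ?_ (mul_le_mul_of_nonneg_left
      (hw.trans (by linarith : _ ≤ condSurRisk m μ c p v - ⨅ w, condSurRisk m μ c p w)) hA)
    have e : (2 : ℝ) ^ μ * 2 ^ (1 - μ) = 2 := by
      rw [← Real.rpow_add (by norm_num)]; norm_num
    have h3 : 0 < 2 - μ := by linarith
    calc (q - r) ^ 2 = (q + r) * ((q - r) ^ 2 / (q + r)) := by field_simp
      _ ≤ (2 - c) * ((q - r) ^ 2 / (q + r)) := mul_le_mul_of_nonneg_right hP2 (by positivity)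
      _ = (2 - c) * (2 - μ) * 2 * ((q - r) ^ 2 / (2 * (2 - μ) * (q + r))) := by field_simp
      _ = (2 - c) * (2 - μ) * ((2 : ℝ) ^ μ * 2 ^ (1 - μ)) *
          ((q - r) ^ 2 / (2 * (2 - μ) * (q + r))) := by rw [e]
      _ = _ := by ring
  · refine le_trans ?_ (Real.sqrt_nonneg _)
    linarith
end

section
/- Lemma (power-mean deficiency inequality for μ ∈ [0,1)). Let c ∈ (0,1), μ ∈ [0,1), and let a, b ≥ 0 satisfy a + b ≤ 2 − c. Then (a + b)/2 − ( (a^{1/(2−μ)} + b^{1/(2−μ)})/2 )^{2−μ} ≥ (1 − μ)·(a − b)² / ( 4·(2 − c)·(2 − μ) ). -/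
theorem aux_log (t : ℝ) (h0 : 0 < t) (h1 : t < 1) :
    2 * t ≤ Real.log (1 + t) - Real.log (1 - t) := by
  have h := Real.hasSum_log_sub_log_of_abs_lt_one (x := t) (by rw [abs_of_pos h0]; exact h1)
  have := le_hasSum h 0 (fun k _ => by positivity)
  simpa using this

theorem aux_exp (r A B t : ℝ) (hr : 0 ≤ r) (ht : 0 ≤ t) (h : 2 * t ≤ A - B) :
    2 * r * t ≤ Real.exp (r * (A + B) / 2) * (Real.exp (-r * B) - Real.exp (-r * A)) := by
  have h1 : Real.exp (r * (A + B) / 2) * (Real.exp (-r * B) - Real.exp (-r * A))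
      = 2 * Real.sinh (r * (A - B) / 2) := by
    rw [Real.sinh_eq, mul_sub, ← Real.exp_add, ← Real.exp_add]
    ring_nf
  rw [h1]
  have h2 : r * (2 * t) ≤ r * (A - B) := mul_le_mul_of_nonneg_left h hr
  have h3 : 0 ≤ r * (2 * t) := by positivity
  have h4 : r * (A - B) / 2 ≤ Real.sinh (r * (A - B) / 2) :=
    Real.self_le_sinh_iff.2 (by linarith)
  linarith

theorem aux_mean (q A B : ℝ) :
    Real.exp (q * (A + B) / 2) ≤ (Real.exp (A * q) + Real.exp (B * q)) / 2 := by
  have e1 : Real.exp (A * q) = Real.exp (A * q / 2) ^ 2 := by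
    rw [← Real.exp_nat_mul]; push_cast; ring_nf
  have e2 : Real.exp (B * q) = Real.exp (B * q / 2) ^ 2 := by
    rw [← Real.exp_nat_mul]; push_cast; ring_nf
  have e3 : Real.exp (q * (A + B) / 2) = Real.exp (A * q / 2) * Real.exp (B * q / 2) := by
    rw [← Real.exp_add]; ring_nf
  rw [e1, e2, e3]
  nlinarith [sq_nonneg (Real.exp (A * q / 2) - Real.exp (B * q / 2))]

theorem aux_main_s12 (p q t : ℝ) (hp : 1 < p) (hq : p * q = 1) (h0 : 0 ≤ t) (h1 : t ≤ 1) :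
    (((1 + t) ^ q + (1 - t) ^ q) / 2) ^ p + (1 - q) * t ^ 2 / 2 ≤ 1 := by
  have hq0 : 0 < q := by
    by_contra h
    nlinarith
  have hq1 : q < 1 := by nlinarith
  have hanti : AntitoneOn (fun t : ℝ => (((1 + t) ^ q + (1 - t) ^ q) / 2) ^ p
      + (1 - q) * t ^ 2 / 2) (Set.Icc 0 1) := by
    have hd : ∀ x ∈ interior (Set.Icc (0:ℝ) 1), HasDerivAt
        (fun t : ℝ => (((1 + t) ^ q + (1 - t) ^ q) / 2) ^ p + (1 - q) * t ^ 2 / 2)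
        ((1 * q * (1 + x) ^ (q - 1) + (-1) * q * (1 - x) ^ (q - 1)) / 2 * p *
          (((1 + x) ^ q + (1 - x) ^ q) / 2) ^ (p - 1) + (1 - q) * (2 * x) / 2) x := by
      intro x hx
      rw [interior_Icc] at hx
      have a1 : 0 < 1 + x := by linarith [hx.1]
      have a2 : 0 < 1 - x := by linarith [hx.2]
      have d1 : HasDerivAt (fun t : ℝ => 1 + t) 1 x := (hasDerivAt_id x).const_add 1
      have d2 : HasDerivAt (fun t : ℝ => 1 - t) (-1) x := (hasDerivAt_id x).const_sub 1
      have d3 := ((d1.rpow_const (p := q) (Or.inl a1.ne')).add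
        (d2.rpow_const (p := q) (Or.inl a2.ne'))).div_const 2
      have d4 := d3.rpow_const (p := p) (Or.inr hp.le)
      have d5 : HasDerivAt (fun t : ℝ => (1 - q) * t ^ 2 / 2) ((1 - q) * (2 * x) / 2) x := by
        simpa using ((hasDerivAt_pow 2 x).const_mul (1 - q)).div_const 2
      exact d4.add d5
    refine antitoneOn_of_deriv_nonpos (convex_Icc 0 1) ?_ ?_ ?_
    · apply ContinuousOn.add
      · apply ContinuousOn.rpow_const
        · apply ContinuousOn.div_const
          apply ContinuousOn.add
          · exact ContinuousOn.rpow_const (by fun_prop) (fun _ _ => Or.inr hq0.le)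
          · exact ContinuousOn.rpow_const (by fun_prop) (fun _ _ => Or.inr hq0.le)
        · exact fun _ _ => Or.inr (by linarith)
      · fun_prop
    · exact fun x hx => (hd x hx).differentiableAt.differentiableWithinAt
    · intro x hx
      rw [(hd x hx).deriv]
      rw [interior_Icc] at hx
      have a1 : 0 < 1 + x := by linarith [hx.1]
      have a2 : 0 < 1 - x := by linarith [hx.2]
      have hl := aux_log x hx.1 hx.2
      rw [Real.rpow_def_of_pos a1, Real.rpow_def_of_pos a2, Real.rpow_def_of_pos a1,
        Real.rpow_def_of_pos a2]
      generalize Real.log (1 + x) = A at *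
      generalize Real.log (1 - x) = B at *
      have m1 := aux_mean q A B
      have m2 := Real.rpow_le_rpow (Real.exp_pos _).le m1 (by linarith : 0 ≤ p - 1)
      rw [← Real.exp_mul] at m2
      have e : q * (A + B) / 2 * (p - 1) = (1 - q) * (A + B) / 2 := by
        linear_combination (A + B) / 2 * hq
      rw [e] at m2
      have m3 := aux_exp (1 - q) A B x (by linarith) hx.1.le hl
      have eA : -(1 - q) * A = A * (q - 1) := by ring
      have eB : -(1 - q) * B = B * (q - 1) := by ring
      rw [eA, eB] at m3
      have m4 : 0 ≤ Real.exp (B * (q - 1)) - Real.exp (A * (q - 1)) := by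
        rw [sub_nonneg, Real.exp_le_exp]
        nlinarith [hx.1]
      have m5 := mul_le_mul_of_nonneg_right m2 m4
      generalize ((Real.exp (A * q) + Real.exp (B * q)) / 2) ^ (p - 1) = M at *
      generalize Real.exp (B * (q - 1)) = U at *
      generalize Real.exp (A * (q - 1)) = V at *
      have : (1 * q * V + -1 * q * U) / 2 * p * M = - (M * (U - V)) / 2 := by
        linear_combination (V - U) * M / 2 * hq
      rw [this]
      linarith
  have := hanti (Set.left_mem_Icc.2 zero_le_one) ⟨h0, h1⟩ h0
  simpa using this

theorem aux_wlog (p q a b : ℝ) (hp : 1 < p) (hq : p * q = 1) (hb : 0 ≤ b) (hab : b ≤ a)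
    (hs : 0 < a + b) :
    ((a ^ q + b ^ q) / 2) ^ p + (1 - q) * (a - b) ^ 2 / (4 * (a + b)) ≤ (a + b) / 2 := by
  have h := aux_main_s12 p q ((a - b) / (a + b)) hp hq
    (div_nonneg (by linarith) hs.le) ((div_le_one hs).2 (by linarith))
  have ea : a = (a + b) / 2 * (1 + (a - b) / (a + b)) := by field_simp; ring
  have eb : b = (a + b) / 2 * (1 - (a - b) / (a + b)) := by field_simp; ring
  have hA : 0 ≤ 1 + (a - b) / (a + b) := by
    have : 0 ≤ (a - b) / (a + b) := div_nonneg (by linarith) hs.le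
    linarith
  have hB : 0 ≤ 1 - (a - b) / (a + b) := by
    have : (a - b) / (a + b) ≤ 1 := (div_le_one hs).2 (by linarith)
    linarith
  have hs2 : 0 < (a + b) / 2 := by linarith
  have eqa : a ^ q = ((a + b) / 2) ^ q * (1 + (a - b) / (a + b)) ^ q := by
    rw [← Real.mul_rpow hs2.le hA, ← ea]
  have eqb : b ^ q = ((a + b) / 2) ^ q * (1 - (a - b) / (a + b)) ^ q := by
    rw [← Real.mul_rpow hs2.le hB, ← eb]
  have e : ((a ^ q + b ^ q) / 2) ^ p = (a + b) / 2 *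
      (((1 + (a - b) / (a + b)) ^ q + (1 - (a - b) / (a + b)) ^ q) / 2) ^ p := by
    rw [eqa, eqb, ← mul_add, mul_div_assoc, Real.mul_rpow (by positivity) (by positivity),
      ← Real.rpow_mul hs2.le, mul_comm q p, hq, Real.rpow_one]
  rw [e]
  have h2 := mul_le_mul_of_nonneg_left h hs2.le
  have e2 : (1 - q) * (a - b) ^ 2 / (4 * (a + b))
      = (a + b) / 2 * ((1 - q) * ((a - b) / (a + b)) ^ 2 / 2) := by
    field_simp; ring
  rw [e2]
  linarith

/-- **Lemma (power-mean deficiency inequality for `μ ∈ [0,1)`).**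
For `c ∈ (0,1)`, `μ ∈ [0,1)` and `a, b ≥ 0` with `a + b ≤ 2 - c`,
`(a+b)/2 - ((a^(1/(2-μ)) + b^(1/(2-μ)))/2)^(2-μ) ≥ (1-μ)(a-b)² / (4(2-c)(2-μ))`. -/
theorem stmt_12 (c μ a b : ℝ) (hc : c ∈ Set.Ioo (0 : ℝ) 1) (hμ : μ ∈ Set.Ico (0 : ℝ) 1)
    (ha : 0 ≤ a) (hb : 0 ≤ b) (hab : a + b ≤ 2 - c) :
    (1 - μ) * (a - b) ^ 2 / (4 * (2 - c) * (2 - μ))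
      ≤ (a + b) / 2 - ((a ^ (1 / (2 - μ)) + b ^ (1 / (2 - μ))) / 2) ^ (2 - μ) := by
  have hp : 1 < 2 - μ := by linarith [hμ.2]
  have hp0 : 0 < 2 - μ := by linarith
  have hq : (2 - μ) * (1 / (2 - μ)) = 1 := by field_simp
  rcases (add_nonneg ha hb).eq_or_lt with hs | hs
  · have a0 : a = 0 := by linarith
    have b0 : b = 0 := by linarith
    subst a0 b0
    have : (2 - μ)⁻¹ ≠ 0 := inv_ne_zero hp0.ne'
    simp [Real.zero_rpow this, Real.zero_rpow hp0.ne']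
  · have key : ((a ^ (1 / (2 - μ)) + b ^ (1 / (2 - μ))) / 2) ^ (2 - μ)
        + (1 - 1 / (2 - μ)) * (a - b) ^ 2 / (4 * (a + b)) ≤ (a + b) / 2 := by
      rcases le_total b a with h | h
      · exact aux_wlog _ _ a b hp hq hb h hs
      · have := aux_wlog _ _ b a hp hq ha h (by linarith)
        rw [add_comm (a ^ _), add_comm a b, show (a - b) ^ 2 = (b - a) ^ 2 by ring]
        exact this
    have h2 : (1 - μ) * (a - b) ^ 2 / (4 * (2 - c) * (2 - μ))
        ≤ (1 - μ) * (a - b) ^ 2 / (4 * (a + b) * (2 - μ)) := by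
      have : 0 ≤ 1 - μ := by linarith
      gcongr
    have h3 : (1 - μ) * (a - b) ^ 2 / (4 * (a + b) * (2 - μ))
        = (1 - 1 / (2 - μ)) * (a - b) ^ 2 / (4 * (a + b)) := by
      have : 1 - 1 / (2 - μ) = (1 - μ) / (2 - μ) := by field_simp; ring
      rw [this]
      field_simp
    linarith
end
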